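/- arXiv:2504.17687 — 2 statements merged into one kernel-verified Lean document; each statement's English description precedes it below -/
import Mathlib

section
/- Let f ∈ ℤ_p{x}, α ∈ ℤ_p with f(α) = 0 and f'(α) ≠ 0, e = v_p(f'(α)), and m > e. Then for s > 0, ∫_{α+p^mℤ_p} |f(x)|_p^s dx = (p^{-m} - p^{-m-1}) · p^{-ms} |f'(α)|_p^s / (1 - p^{-(s+1)}). -/
open MeasureTheory Filter

lemma stmt13_exp (p : ℕ) [Fact p.Prime] (a : ℕ → ℤ_[p]) (ha : Tendsto a atTop (nhds 0))
    (α x : ℤ_[p]) : ∃ c : ℤ_[p], (∑' i : ℕ, a i * x ^ i) = (∑' i : ℕ, a i * α ^ i)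
      + (∑' i : ℕ, ((i + 1 : ℕ) : ℤ_[p]) * a (i + 1) * α ^ i) * (x - α) + c * (x - α) ^ 2 := by
  have hsum : ∀ (b : ℕ → ℤ_[p]), Tendsto b atTop (nhds 0) → ∀ g : ℕ → ℤ_[p],
      Summable (fun i => b i * g i) := by
    intro b hb g
    apply NonarchimedeanAddGroup.summable_of_tendsto_cofinite_zero
    rw [Nat.cofinite_eq_atTop]
    refine squeeze_zero_norm (a := fun i => ‖b i‖) ?_ (by simpa using hb.norm)
    intro i
    rw [norm_mul]
    exact mul_le_of_le_one_right (norm_nonneg _) (PadicInt.norm_le_one _)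
  let k : ℕ → ℤ_[p] := fun i => (Polynomial.powAddExpansion α (x - α) i).1
  have hk : ∀ i, x ^ i = α ^ i + i * α ^ (i - 1) * (x - α) + k i * (x - α) ^ 2 := by
    intro i
    have := (Polynomial.powAddExpansion α (x - α) i).2
    exact (congrArg (· ^ i) (add_sub_cancel α x)).symm.trans this
  have h1 := hsum a ha (fun i => α ^ i)
  have h2 := hsum a ha (fun i => i * α ^ (i - 1))
  have h3 := hsum a ha k
  refine ⟨∑' i, a i * k i, ?_⟩
  have hd : (∑' i : ℕ, ((i + 1 : ℕ) : ℤ_[p]) * a (i + 1) * α ^ i)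
      = ∑' i : ℕ, a i * (i * α ^ (i - 1)) := by
    rw [h2.tsum_eq_zero_add]
    simp only [Nat.cast_zero, zero_mul, mul_zero, zero_add, Nat.add_sub_cancel]
    exact tsum_congr fun i => by ring
  rw [hd, ← h2.tsum_mul_right, ← h3.tsum_mul_right, ← h1.tsum_add (h2.mul_right _),
    ← (h1.add (h2.mul_right _)).tsum_add (h3.mul_right _)]
  refine tsum_congr fun i => ?_
  rw [hk i]
  ring

lemma stmt13_norm (p : ℕ) [Fact p.Prime] (a : ℕ → ℤ_[p]) (ha : Tendsto a atTop (nhds 0))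
    (α x : ℤ_[p]) (hzero : (∑' i : ℕ, a i * α ^ i) = 0)
    (hx : ‖x - α‖ < ‖∑' i : ℕ, ((i + 1 : ℕ) : ℤ_[p]) * a (i + 1) * α ^ i‖) :
    ‖∑' i : ℕ, a i * x ^ i‖
      = ‖x - α‖ * ‖∑' i : ℕ, ((i + 1 : ℕ) : ℤ_[p]) * a (i + 1) * α ^ i‖ := by
  obtain ⟨c, hc⟩ := stmt13_exp p a ha α x
  rw [hc, hzero, zero_add]
  set d := ∑' i : ℕ, ((i + 1 : ℕ) : ℤ_[p]) * a (i + 1) * α ^ i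
  have h : ‖d + c * (x - α)‖ = ‖d‖ := by
    have hlt : ‖c * (x - α)‖ < ‖d‖ := by
      rw [norm_mul]
      exact (mul_le_of_le_one_left (norm_nonneg _) (PadicInt.norm_le_one _)).trans_lt hx
    rw [PadicInt.norm_add_eq_max_of_ne hlt.ne', max_eq_left hlt.le]
  rw [show d * (x - α) + c * (x - α) ^ 2 = (x - α) * (d + c * (x - α)) by ring, norm_mul, h]

lemma stmt13_meas (p : ℕ) [Fact p.Prime]
    [MeasurableSpace ℤ_[p]] [BorelSpace ℤ_[p]]
    (μ : Measure ℤ_[p]) [μ.IsAddHaarMeasure] (hμ : μ Set.univ = 1) (α : ℤ_[p]) (k : ℕ) :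
    μ.real {x : ℤ_[p] | ‖x - α‖ ≤ (p : ℝ) ^ (-(k : ℤ))} = (p : ℝ) ^ (-(k : ℤ)) := by
  have hp : 0 < p := (Fact.out : p.Prime).pos
  haveI : NeZero (p ^ k) := ⟨(pow_pos hp k).ne'⟩
  let φ : ℤ_[p] →+ ZMod (p ^ k) := (PadicInt.toZModPow k).toAddMonoidHom
  have hφ : Function.Surjective φ := ZMod.ringHom_surjective (PadicInt.toZModPow k)
  have hidx : φ.ker.index = p ^ k := by
    rw [AddSubgroup.index_ker, AddMonoidHom.range_eq_top.2 hφ]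
    simp [Nat.card_zmod]
  haveI : φ.ker.FiniteIndex := ⟨by rw [hidx]; exact (pow_pos hp k).ne'⟩
  have hker : (φ.ker : Set ℤ_[p]) = {x : ℤ_[p] | ‖x‖ ≤ (p : ℝ) ^ (-(k : ℤ))} := by
    ext x
    rw [Set.mem_setOf_eq, PadicInt.norm_le_pow_iff_mem_span_pow, ← PadicInt.ker_toZModPow]
    rfl
  have hm : MeasurableSet (φ.ker : Set ℤ_[p]) := by
    rw [hker]
    exact (isClosed_le continuous_norm continuous_const).measurableSet
  have h := AddSubgroup.index_mul_measure φ.ker hm μ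
  rw [hμ, hidx, hker] at h
  have ht : μ {x : ℤ_[p] | ‖x - α‖ ≤ (p : ℝ) ^ (-(k : ℤ))}
      = μ {x : ℤ_[p] | ‖x‖ ≤ (p : ℝ) ^ (-(k : ℤ))} := by
    rw [← measure_preimage_add_right μ (-α) {x : ℤ_[p] | ‖x‖ ≤ (p : ℝ) ^ (-(k : ℤ))}]
    simp [sub_eq_add_neg]
  rw [Measure.real, ht]
  have h' := congrArg ENNReal.toReal h
  rw [ENNReal.toReal_mul] at h'
  simp only [Nat.cast_pow, ENNReal.toReal_pow, ENNReal.toReal_natCast, ENNReal.toReal_one] at h'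
  refine (eq_inv_of_mul_eq_one_right h').trans ?_
  rw [zpow_neg, zpow_natCast]

lemma stmt13_int (p : ℕ) [Fact p.Prime]
    [MeasurableSpace ℤ_[p]] [BorelSpace ℤ_[p]]
    (μ : Measure ℤ_[p]) [μ.IsAddHaarMeasure] (hμ : μ Set.univ = 1) (α : ℤ_[p]) (m : ℕ)
    (s : ℝ) (hs : 0 < s) :
    (∫ x in {x : ℤ_[p] | ‖x - α‖ ≤ (p : ℝ) ^ (-(m : ℤ))}, ‖x - α‖ ^ s ∂μ)
      = ((p : ℝ) ^ (-(m : ℤ)) - (p : ℝ) ^ (-(m : ℤ) - 1))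
        * (p : ℝ) ^ (-(m : ℝ) * s) / (1 - (p : ℝ) ^ (-(s + 1))) := by
  have hp1 : (1 : ℝ) < p := by exact_mod_cast (Fact.out : p.Prime).one_lt
  have hp0 : (0 : ℝ) < p := by linarith
  haveI : IsFiniteMeasure μ := ⟨by rw [hμ]; exact ENNReal.one_lt_top⟩
  let S : ℕ → Set ℤ_[p] := fun k => {x : ℤ_[p] | ‖x - α‖ ≤ (p : ℝ) ^ (-(k : ℤ))}
  have hSm : ∀ k, MeasurableSet (S k) := fun k =>
    (isClosed_le (by fun_prop) continuous_const).measurableSet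
  have hS : ∀ k, μ.real (S k) = (p : ℝ) ^ (-(k : ℤ)) := stmt13_meas p μ hμ α
  have hsub : ∀ k, S (k + 1) ⊆ S k := by
    intro k x hx
    refine le_trans (hx : ‖x - α‖ ≤ _) (zpow_le_zpow_right₀ hp1.le ?_)
    push_cast; linarith
  have hcont : Continuous (fun x : ℤ_[p] => ‖x - α‖ ^ s) :=
    Continuous.rpow_const (by fun_prop) fun _ => Or.inr hs.le
  have hle1 : ∀ x : ℤ_[p], ‖‖x - α‖ ^ s‖ ≤ 1 := by
    intro x
    rw [Real.norm_of_nonneg (by positivity)]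
    exact Real.rpow_le_one (norm_nonneg _) (PadicInt.norm_le_one _) hs.le
  have hint : Integrable (fun x : ℤ_[p] => ‖x - α‖ ^ s) μ :=
    Integrable.of_bound hcont.aestronglyMeasurable 1 (Eventually.of_forall hle1)
  let I : ℕ → ℝ := fun k => ∫ x in S k, ‖x - α‖ ^ s ∂μ
  set r : ℝ := (p : ℝ) ^ (-(s + 1)) with hr
  have hr0 : 0 < r := Real.rpow_pos_of_pos hp0 _
  have hr1 : r < 1 := Real.rpow_lt_one_of_one_lt_of_neg hp1 (by linarith)
  have hrk : ∀ k : ℕ, ((p : ℝ) ^ (-(k : ℤ)) - (p : ℝ) ^ (-(k : ℤ) - 1))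
        * (p : ℝ) ^ (-(k : ℝ) * s) = (1 - (p : ℝ)⁻¹) * r ^ k := by
    intro k
    have e1 : r ^ k = (p : ℝ) ^ (-(k : ℤ)) * (p : ℝ) ^ (-(k : ℝ) * s) := by
      rw [← Real.rpow_natCast, hr, ← Real.rpow_mul hp0.le, ← Real.rpow_intCast,
        ← Real.rpow_add hp0]
      congr 1
      push_cast; ring
    rw [e1, zpow_sub_one₀ hp0.ne']
    ring
  have hrec : ∀ k, I k = (1 - (p : ℝ)⁻¹) * r ^ k + I (k + 1) := by
    intro k
    have hd : ∫ x in S k \ S (k + 1), ‖x - α‖ ^ s ∂μ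
        = ∫ x in S k \ S (k + 1), (p : ℝ) ^ (-(k : ℝ) * s) ∂μ := by
      refine setIntegral_congr_fun ((hSm k).diff (hSm _)) ?_
      rintro x ⟨hx1, hx2⟩
      have hx3 : ‖x - α‖ = (p : ℝ) ^ (-(k : ℤ)) := by
        refine le_antisymm hx1 ?_
        by_contra hlt
        apply hx2
        change ‖x - α‖ ≤ _
        rw [PadicInt.norm_le_pow_iff_norm_lt_pow_add_one]
        push_cast
        rw [neg_add, neg_add_cancel_right]
        exact not_le.1 hlt
      change ‖x - α‖ ^ s = _
      rw [hx3, ← Real.rpow_intCast, ← Real.rpow_mul hp0.le]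
      push_cast; rfl
    have h1 := integral_diff (hSm (k + 1)) hint.integrableOn (hsub k) (μ := μ) (s := S k)
    rw [hd, setIntegral_const, measureReal_diff (hsub k) (hSm _), hS, hS, smul_eq_mul] at h1
    have h2 := hrk k
    rw [show (-(k : ℤ) - 1) = -((k + 1 : ℕ) : ℤ) by push_cast; ring, h1] at h2
    change I k - I (k + 1) = _ at h2
    linarith
  have hI0 : Tendsto I atTop (nhds 0) := by
    refine squeeze_zero_norm (a := fun k => ((p : ℝ)⁻¹) ^ k) ?_
      (tendsto_pow_atTop_nhds_zero_of_lt_one (by positivity) (inv_lt_one_of_one_lt₀ hp1))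
    intro k
    have := norm_setIntegral_le_of_norm_le_const (μ := μ) (s := S k) (measure_lt_top _ _)
      (fun x _ => hle1 x)
    rwa [hS, one_mul, zpow_neg, zpow_natCast, ← inv_pow] at this
  let D : ℕ → ℝ := fun k => I k - (1 - (p : ℝ)⁻¹) * r ^ k / (1 - r)
  have hDc : ∀ k, D (k + m) = D m := by
    intro k
    induction k with
    | zero => simp
    | succ k ih =>
      rw [← ih, add_right_comm]
      change I _ - _ = I _ - _
      rw [hrec (k + m)]
      have : 1 - r ≠ 0 := by linarith
      field_simp
      ring
  have hD0 : Tendsto D atTop (nhds 0) := by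
    have := hI0.sub (((tendsto_pow_atTop_nhds_zero_of_lt_one hr0.le hr1).const_mul
      (1 - (p : ℝ)⁻¹)).div_const (1 - r))
    simpa using this
  have hDm : D m = 0 := by
    have h1 := (tendsto_add_atTop_iff_nat m).2 hD0
    simp only [hDc] at h1
    exact tendsto_nhds_unique tendsto_const_nhds h1
  rw [hrk m]
  exact sub_eq_zero.1 hDm

/-- Integral of `|f|^s` over a small ball around a simple zero `α` of a restricted power
series `f` (given by coefficients `a i → 0`, with `f x = ∑' i, a i * x ^ i` and
`f' x = ∑' i, (i+1) * a (i+1) * x ^ i`), where `e = v_p(f'(α))` and `m > e`. -/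
theorem stmt_13 (p : ℕ) [Fact p.Prime]
    [MeasurableSpace ℤ_[p]] [BorelSpace ℤ_[p]]
    (μ : Measure ℤ_[p]) [μ.IsAddHaarMeasure] (hμ : μ Set.univ = 1)
    (a : ℕ → ℤ_[p]) (ha : Tendsto a atTop (nhds 0)) (α : ℤ_[p]) (e m : ℕ)
    (hzero : (∑' i : ℕ, a i * α ^ i) = 0)
    (hne : (∑' i : ℕ, ((i + 1 : ℕ) : ℤ_[p]) * a (i + 1) * α ^ i) ≠ 0)
    (hval : ‖∑' i : ℕ, ((i + 1 : ℕ) : ℤ_[p]) * a (i + 1) * α ^ i‖ = (p : ℝ) ^ (-(e : ℤ)))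
    (hm : e < m) (s : ℝ) (hs : 0 < s) :
    (∫ x in {x : ℤ_[p] | ‖x - α‖ ≤ (p : ℝ) ^ (-(m : ℤ))}, ‖∑' i : ℕ, a i * x ^ i‖ ^ s ∂μ)
      = ((p : ℝ) ^ (-(m : ℤ)) - (p : ℝ) ^ (-(m : ℤ) - 1))
        * (p : ℝ) ^ (-(m : ℝ) * s)
        * ‖∑' i : ℕ, ((i + 1 : ℕ) : ℤ_[p]) * a (i + 1) * α ^ i‖ ^ s
        / (1 - (p : ℝ) ^ (-(s + 1))) := by
  have hp1 : (1 : ℝ) < p := by exact_mod_cast (Fact.out : p.Prime).one_lt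
  have hp0 : (0 : ℝ) < p := by linarith
  have hcongr : (∫ x in {x : ℤ_[p] | ‖x - α‖ ≤ (p : ℝ) ^ (-(m : ℤ))},
      ‖∑' i : ℕ, a i * x ^ i‖ ^ s ∂μ)
      = ∫ x in {x : ℤ_[p] | ‖x - α‖ ≤ (p : ℝ) ^ (-(m : ℤ))}, ‖x - α‖ ^ s
        * ‖∑' i : ℕ, ((i + 1 : ℕ) : ℤ_[p]) * a (i + 1) * α ^ i‖ ^ s ∂μ := by
    refine setIntegral_congr_fun (isClosed_le (by fun_prop) continuous_const).measurableSet ?_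
    intro x hx
    have hx' : ‖x - α‖ < ‖∑' i : ℕ, ((i + 1 : ℕ) : ℤ_[p]) * a (i + 1) * α ^ i‖ := by
      rw [hval]
      refine lt_of_le_of_lt hx (zpow_lt_zpow_right₀ hp1 ?_)
      omega
    change ‖∑' i : ℕ, a i * x ^ i‖ ^ s = _
    rw [stmt13_norm p a ha α x hzero hx', Real.mul_rpow (norm_nonneg _) (norm_nonneg _)]
  rw [hcongr, integral_mul_const, stmt13_int p μ hμ α m s hs]
  ring
end

section
/- Let f ∈ ℤ_p{x_1,…,x_n} be nonzero with f(0)=0, non-degenerate over 𝔽_p with respect to all faces of its Newton polyhedron Γ(f). Then there exists N such that for all D ≥ N, the truncation f_D has the same Igusa zeta function as f: ∫_{ℤ_p^n}|f_D(x)|_p^s dx = ∫_{ℤ_p^n}|f(x)|_p^s dx for all s > 0. -/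
open MeasureTheory Filter

/-- The Newton polyhedron of a (support) set `S ⊆ ℕ^n`: the convex hull in `(ℝ⁺)^n` of
the union of the translated positive orthants `ω + (ℝ⁺)^n`, `ω ∈ S`. -/
def newtonPolyhedron (n : ℕ) (S : Set (Fin n → ℕ)) : Set (Fin n → ℝ) :=
  convexHull ℝ (⋃ ω ∈ S, {y : Fin n → ℝ | ∀ j, (ω j : ℝ) ≤ y j})

/-- The first meet locus `F(k) = {z ∈ Γ | k·z = m(k)}` of a vector `k ∈ (ℝ⁺)^n`, where
`m(k) = inf_{y ∈ Γ} k·y` and `Γ` is the Newton polyhedron of `S`. Every face of the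
Newton polyhedron arises in this way (with `F(0) = Γ` itself). -/
def firstMeetLocus (n : ℕ) (S : Set (Fin n → ℕ)) (k : Fin n → ℝ) : Set (Fin n → ℝ) :=
  {z ∈ newtonPolyhedron n S |
    ∑ j, k j * z j = sInf ((fun y => ∑ j, k j * y j) '' newtonPolyhedron n S)}

/-- The value at `x` of the face series `f_τ = ∑_{ω ∈ τ} a_ω x^ω` associated to a face
`τ ⊆ ℝ^n` of the Newton polyhedron of `f = ∑ a_ω x^ω`. -/
noncomputable def faceEval (p : ℕ) [Fact p.Prime] (n : ℕ) (a : (Fin n → ℕ) → ℤ_[p])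
    (τ : Set (Fin n → ℝ)) (x : Fin n → ℤ_[p]) : ℤ_[p] :=
  ∑' ω : Fin n → ℕ,
    Set.indicator {ω : Fin n → ℕ | (fun j => (ω j : ℝ)) ∈ τ}
      (fun ω => a ω * ∏ j, x j ^ ω j) ω

/-- The value at `x` of the `i`-th partial derivative `∂f_τ/∂x_i` of the face series
`f_τ`. -/
noncomputable def faceDerivEval (p : ℕ) [Fact p.Prime] (n : ℕ) (a : (Fin n → ℕ) → ℤ_[p])
    (τ : Set (Fin n → ℝ)) (i : Fin n) (x : Fin n → ℤ_[p]) : ℤ_[p] :=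
  ∑' ω : Fin n → ℕ,
    Set.indicator {ω : Fin n → ℕ | (fun j => (ω j : ℝ)) ∈ τ}
      (fun ω => ((ω i : ℤ_[p])) * a ω * ∏ j, x j ^ (ω j - if j = i then 1 else 0)) ω

/-- `f` is non-degenerate over `𝔽_p` with respect to all the faces of its Newton
polyhedron: for every face `τ` (i.e. every first meet locus `F(k)`, `k ∈ (ℝ⁺)^n`),
the congruences `f_τ ≡ 0`, `∂f_τ/∂x_i ≡ 0 (mod p)` have no common solution in
`(ℤ_p^×)^n`. -/
def NonDegenerate (p : ℕ) [Fact p.Prime] (n : ℕ) (a : (Fin n → ℕ) → ℤ_[p]) : Prop :=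
  ∀ k : Fin n → ℝ, (∀ j, 0 ≤ k j) →
    ¬ ∃ x : Fin n → ℤ_[p], (∀ j, IsUnit (x j)) ∧
      (p : ℤ_[p]) ∣ faceEval p n a (firstMeetLocus n {ω | a ω ≠ 0} k) x ∧
      ∀ i : Fin n, (p : ℤ_[p]) ∣ faceDerivEval p n a (firstMeetLocus n {ω | a ω ≠ 0} k) i x


/-- The value at `x` of the power series with coefficients `c`. -/
noncomputable def psEval (p : ℕ) [Fact p.Prime] (n : ℕ) (c : (Fin n → ℕ) → ℤ_[p])
    (x : Fin n → ℤ_[p]) : ℤ_[p] :=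
  ∑' ω : Fin n → ℕ, c ω * ∏ j, x j ^ ω j

theorem aux_tendsto_mul {p : ℕ} [Fact p.Prime] {ι : Type*} {c : ι → ℤ_[p]}
    (hc : Tendsto c cofinite (nhds 0)) (e : ι → ℤ_[p]) :
    Tendsto (fun ω => c ω * e ω) cofinite (nhds 0) := by
  rw [tendsto_zero_iff_norm_tendsto_zero] at hc ⊢
  refine squeeze_zero (fun _ => norm_nonneg _) (fun ω => ?_) hc
  rw [norm_mul]
  exact mul_le_of_le_one_right (norm_nonneg _) (PadicInt.norm_le_one _)

theorem aux_summable {p : ℕ} [Fact p.Prime] {ι : Type*} {c : ι → ℤ_[p]}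
    (hc : Tendsto c cofinite (nhds 0)) (e : ι → ℤ_[p]) :
    Summable (fun ω => c ω * e ω) :=
  NonarchimedeanAddGroup.summable_of_tendsto_cofinite_zero (aux_tendsto_mul hc e)

theorem aux_norm_le_inv {p : ℕ} [hp : Fact p.Prime] {x : ℤ_[p]} (h : (p : ℤ_[p]) ∣ x) :
    ‖x‖ ≤ (p : ℝ)⁻¹ := by
  obtain ⟨y, rfl⟩ := h
  rw [norm_mul, PadicInt.norm_p]
  exact mul_le_of_le_one_right (by positivity) (PadicInt.norm_le_one _)

theorem aux_dvd_tsum {p : ℕ} [Fact p.Prime] {ι : Type*} {g : ι → ℤ_[p]}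
    (h : ∀ ω, (p : ℤ_[p]) ∣ g ω) : (p : ℤ_[p]) ∣ ∑' ω, g ω := by
  rw [← PadicInt.norm_lt_one_iff_dvd]
  have hp := (Fact.out : p.Prime)
  refine lt_of_le_of_lt (b := (p : ℝ)⁻¹) ?_ (inv_lt_one_of_one_lt₀ (by exact_mod_cast hp.one_lt))
  refine (IsUltrametricDist.norm_tsum_le g).trans (Real.iSup_le (fun i => ?_) (by positivity))
  exact aux_norm_le_inv (h i)

theorem aux_dvd_tsum_sub {p : ℕ} [Fact p.Prime] {ι : Type*} {g h : ι → ℤ_[p]}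
    (hg : Summable g) (hh : Summable h)
    (H : ∀ ω, (p : ℤ_[p]) ∣ g ω - h ω) : (p : ℤ_[p]) ∣ ∑' ω, g ω - ∑' ω, h ω := by
  rw [← hg.tsum_sub hh]
  exact aux_dvd_tsum H

theorem aux_prod_congr {p : ℕ} [Fact p.Prime] {ι : Type*} (s : Finset ι) (f g : ι → ℤ_[p])
    (h : ∀ j ∈ s, (p : ℤ_[p]) ∣ f j - g j) : (p : ℤ_[p]) ∣ ∏ j ∈ s, f j - ∏ j ∈ s, g j := by
  simp only [← Ideal.mem_span_singleton, ← Ideal.Quotient.eq] at h ⊢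
  rw [map_prod, map_prod]
  exact Finset.prod_congr rfl h

theorem aux_ps_congr {p : ℕ} [Fact p.Prime] {n : ℕ} {c : (Fin n → ℕ) → ℤ_[p]}
    (hc : Tendsto c cofinite (nhds 0)) {u v : Fin n → ℤ_[p]}
    (h : ∀ j, (p : ℤ_[p]) ∣ v j - u j) :
    (p : ℤ_[p]) ∣ psEval p n c v - psEval p n c u := by
  refine aux_dvd_tsum_sub (aux_summable hc _) (aux_summable hc _) fun ω => ?_
  rw [← mul_sub]
  refine Dvd.dvd.mul_left (aux_prod_congr _ _ _ fun j _ => ?_) _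
  exact (h j).trans (sub_dvd_pow_sub_pow _ _ _)

theorem aux_slope {p : ℕ} [Fact p.Prime] {n : ℕ} {c : (Fin n → ℕ) → ℤ_[p]}
    (hc : Tendsto c cofinite (nhds 0)) {u v : Fin n → ℤ_[p]}
    (h : ∀ j, (p : ℤ_[p]) ∣ v j - u j) (i : Fin n) (t t' : ℤ_[p])
    (ht : (p : ℤ_[p]) ∣ t - u i) (ht' : (p : ℤ_[p]) ∣ t' - u i) :
    ∃ Q, (p : ℤ_[p]) ∣ Q - ∑' ω : Fin n → ℕ,
        ((ω i : ℤ_[p])) * c ω * ∏ j, u j ^ (ω j - if j = i then 1 else 0) ∧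
      psEval p n c (Function.update v i t) - psEval p n c (Function.update v i t')
        = (t - t') * Q := by
  have key : ∀ (w : Fin n → ℤ_[p]) (r : ℤ_[p]) (ω : Fin n → ℕ),
      ∏ j, (Function.update w i r) j ^ ω j =
        r ^ ω i * ∏ j ∈ Finset.univ.erase i, w j ^ ω j := by
    intro w r ω
    rw [← Finset.mul_prod_erase Finset.univ _ (Finset.mem_univ i)]
    congr 1
    · simp
    · refine Finset.prod_congr rfl fun j hj => ?_
      rw [Function.update_of_ne (Finset.ne_of_mem_erase hj)]
  have key2 : ∀ (ω : Fin n → ℕ), ∏ j, u j ^ (ω j - if j = i then 1 else 0) =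
        u i ^ (ω i - 1) * ∏ j ∈ Finset.univ.erase i, u j ^ ω j := by
    intro ω
    rw [← Finset.mul_prod_erase Finset.univ _ (Finset.mem_univ i)]
    congr 1
    · simp
    · refine Finset.prod_congr rfl fun j hj => ?_
      simp [Finset.ne_of_mem_erase hj]
  refine ⟨∑' ω : Fin n → ℕ, c ω * ((∑ l ∈ Finset.range (ω i), t ^ l * t' ^ (ω i - 1 - l)) *
    ∏ j ∈ Finset.univ.erase i, v j ^ ω j), ?_, ?_⟩
  · have hs : Summable (fun ω : Fin n → ℕ =>
        ((ω i : ℤ_[p])) * c ω * ∏ j, u j ^ (ω j - if j = i then 1 else 0)) := by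
      refine (aux_summable hc (fun ω => (ω i : ℤ_[p]) *
        ∏ j, u j ^ (ω j - if j = i then 1 else 0))).congr fun ω => ?_
      ring
    refine aux_dvd_tsum_sub (aux_summable hc _) hs fun ω => ?_
    have e1 : (p : ℤ_[p]) ∣ (∑ l ∈ Finset.range (ω i), t ^ l * t' ^ (ω i - 1 - l))
        - (ω i : ℤ_[p]) * u i ^ (ω i - 1) := by
      have : (ω i : ℤ_[p]) * u i ^ (ω i - 1)
          = ∑ l ∈ Finset.range (ω i), u i ^ l * u i ^ (ω i - 1 - l) := by
        rw [Finset.sum_congr rfl (g := fun _ => u i ^ (ω i - 1))]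
        · simp
        · intro l hl
          have := Finset.mem_range.1 hl
          rw [← pow_add]
          congr 1
          omega
      rw [this, ← Finset.sum_sub_distrib]
      refine Finset.dvd_sum fun l _ => ?_
      have a1 := ht.trans (sub_dvd_pow_sub_pow t (u i) l)
      have a2 := ht'.trans (sub_dvd_pow_sub_pow t' (u i) (ω i - 1 - l))
      have : t ^ l * t' ^ (ω i - 1 - l) - u i ^ l * u i ^ (ω i - 1 - l)
        = (t ^ l - u i ^ l) * t' ^ (ω i - 1 - l)
          + u i ^ l * (t' ^ (ω i - 1 - l) - u i ^ (ω i - 1 - l)) := by ring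
      rw [this]
      exact dvd_add (a1.mul_right _) (a2.mul_left _)
    have e2 : (p : ℤ_[p]) ∣ ∏ j ∈ Finset.univ.erase i, v j ^ ω j
        - ∏ j ∈ Finset.univ.erase i, u j ^ ω j :=
      aux_prod_congr _ _ _ fun j _ => (h j).trans (sub_dvd_pow_sub_pow _ _ _)
    rw [key2]
    set A := ∑ l ∈ Finset.range (ω i), t ^ l * t' ^ (ω i - 1 - l)
    set B := ∏ j ∈ Finset.univ.erase i, v j ^ ω j
    set B' := ∏ j ∈ Finset.univ.erase i, u j ^ ω j
    have : c ω * (A * B) - (ω i : ℤ_[p]) * c ω * (u i ^ (ω i - 1) * B')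
      = c ω * ((A - (ω i : ℤ_[p]) * u i ^ (ω i - 1)) * B
        + (ω i : ℤ_[p]) * u i ^ (ω i - 1) * (B - B')) := by ring
    rw [this]
    exact (dvd_add (e1.mul_right _) (e2.mul_left _)).mul_left _
  · unfold psEval
    rw [← (aux_summable hc _).tsum_sub (aux_summable hc _), ← (aux_summable hc _).tsum_mul_left]
    refine tsum_congr fun ω => ?_
    rw [key, key]
    have := Commute.mul_geom_sum₂ (Commute.all t t') (ω i)
    rw [← mul_sub, ← sub_mul, ← this]
    ring

theorem aux_unit_of_not_dvd {p : ℕ} [hp : Fact p.Prime] {x : ℤ_[p]} (h : ¬ (p : ℤ_[p]) ∣ x) :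
    IsUnit x := by
  rw [PadicInt.isUnit_iff]
  rw [← PadicInt.norm_lt_one_iff_dvd] at h
  exact le_antisymm (PadicInt.norm_le_one _) (not_lt.1 h)

theorem aux_zero {p : ℕ} [hp : Fact p.Prime] (g : ℤ_[p] → ℤ_[p]) (w d : ℤ_[p])
    (hd : ¬ (p : ℤ_[p]) ∣ d) (hg : ∀ t, (p : ℤ_[p]) ∣ t - w → (p : ℤ_[p]) ∣ g t)
    (hs : ∀ t t', (p : ℤ_[p]) ∣ t - w → (p : ℤ_[p]) ∣ t' - w →
      ∃ Q, (p : ℤ_[p]) ∣ Q - d ∧ g t - g t' = (t - t') * Q) :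
    ∃ t0, (p : ℤ_[p]) ∣ t0 - w ∧ g t0 = 0 := by
  have hw : ∀ r : ℤ_[p], (p : ℤ_[p]) ∣ (w + p * r) - w := fun r => ⟨r, by ring⟩
  have hp0 : (p : ℤ_[p]) ≠ 0 := by exact_mod_cast hp.out.ne_zero
  choose h hh using fun r => hg _ (hw r)
  obtain ⟨e, he⟩ := isUnit_iff_exists_inv.1 (aux_unit_of_not_dvd hd)
  have hc : ContractingWith (p : NNReal)⁻¹ (fun r => r - h r * e) := by
    refine ⟨inv_lt_one_of_one_lt₀ (by exact_mod_cast hp.out.one_lt), ?_⟩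
    refine LipschitzWith.of_dist_le_mul fun r r' => ?_
    obtain ⟨Q, hQ, hQ'⟩ := hs _ _ (hw r) (hw r')
    have h1 : h r - h r' = (r - r') * Q := by
      apply mul_left_cancel₀ hp0
      rw [mul_sub, ← hh, ← hh, hQ']
      ring
    have h2 : r - h r * e - (r' - h r' * e) = (r - r') * (-((Q - d) * e)) := by
      have : r - h r * e - (r' - h r' * e) = (r - r') - (h r - h r') * e := by ring
      rw [this, h1]
      linear_combination (-(r - r')) * he
    rw [dist_eq_norm, dist_eq_norm, h2, norm_mul, mul_comm]
    have h3 := aux_norm_le_inv (x := -((Q - d) * e)) (dvd_neg.2 (hQ.mul_right e))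
    refine mul_le_mul_of_nonneg_right (h3.trans (le_of_eq ?_)) (norm_nonneg _)
    simp
  have hf := hc.fixedPoint_isFixedPt
  set r := ContractingWith.fixedPoint _ hc
  have hf' : r - h r * e = r := hf
  have h0 : h r * e = 0 := by linear_combination -hf'
  have h1 : h r = 0 := by linear_combination d * h0 - (h r) * he
  exact ⟨w + p * r, hw r, by rw [hh, h1, mul_zero]⟩

theorem aux_face {n : ℕ} (S : Set (Fin n → ℕ)) (k : Fin n → ℕ) (m : ℕ)
    (hm : ∀ ω ∈ S, m ≤ ∑ j, k j * ω j) (hm' : ∃ ω ∈ S, ∑ j, k j * ω j = m) (ω : Fin n → ℕ)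
    (hω : ω ∈ S) :
    (fun j => (ω j : ℝ)) ∈ firstMeetLocus n S (fun j => (k j : ℝ)) ↔ ∑ j, k j * ω j = m := by
  have mem : ∀ ω ∈ S, (fun j => (ω j : ℝ)) ∈ newtonPolyhedron n S := by
    intro ω hω
    apply subset_convexHull
    simp only [Set.mem_iUnion]
    exact ⟨ω, hω, fun j => le_rfl⟩
  have lb : ∀ z ∈ newtonPolyhedron n S, (m : ℝ) ≤ ∑ j, (k j : ℝ) * z j := by
    intro z hz
    have : newtonPolyhedron n S ⊆ {z | (m : ℝ) ≤ ∑ j, (k j : ℝ) * z j} := by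
      refine convexHull_min ?_ (convex_halfSpace_ge ?_ _)
      · intro y hy
        simp only [Set.mem_iUnion] at hy
        obtain ⟨ω, hω, hy⟩ := hy
        have h1 : (m : ℝ) ≤ ∑ j, (k j : ℝ) * (ω j : ℝ) := by exact_mod_cast hm ω hω
        refine h1.trans (Finset.sum_le_sum fun j _ => ?_)
        exact mul_le_mul_of_nonneg_left (hy j) (Nat.cast_nonneg _)
      · constructor
        · intro x y
          simp [mul_add, Finset.sum_add_distrib]
        · intro r x
          simp only [Pi.smul_apply, smul_eq_mul, Finset.mul_sum]
          exact Finset.sum_congr rfl fun j _ => by ring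
    exact this hz
  have hinf : sInf ((fun y => ∑ j, (k j : ℝ) * y j) '' newtonPolyhedron n S) = m := by
    refine IsLeast.csInf_eq ⟨?_, ?_⟩
    · obtain ⟨ω, hω, h⟩ := hm'
      refine ⟨_, mem ω hω, ?_⟩
      simp only
      exact_mod_cast h
    · rintro _ ⟨z, hz, rfl⟩
      exact lb z hz
  unfold firstMeetLocus
  rw [hinf]
  constructor
  · rintro ⟨-, h⟩
    simp only at h
    exact_mod_cast h
  · intro h
    refine ⟨mem ω hω, ?_⟩
    simp only
    exact_mod_cast h

theorem aux_scale {p : ℕ} [Fact p.Prime] {n : ℕ} {b : (Fin n → ℕ) → ℤ_[p]}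
    (hb : Tendsto b cofinite (nhds 0)) (k : Fin n → ℕ) (m : ℕ)
    (hm : ∀ ω, b ω ≠ 0 → m ≤ ∑ j, k j * ω j) (v : Fin n → ℤ_[p]) :
    psEval p n b (fun j => (p : ℤ_[p]) ^ k j * v j) =
      (p : ℤ_[p]) ^ m * psEval p n (fun ω => b ω * (p : ℤ_[p]) ^ (∑ j, k j * ω j - m)) v := by
  unfold psEval
  rw [← (aux_summable (aux_tendsto_mul hb _) _).tsum_mul_left]
  refine tsum_congr fun ω => ?_
  by_cases h : b ω = 0
  · simp [h]
  have := hm ω h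
  have e : (p : ℤ_[p]) ^ (∑ j, k j * ω j) = p ^ m * p ^ (∑ j, k j * ω j - m) := by
    rw [← pow_add]; congr 1; omega
  simp only [mul_pow, Finset.prod_mul_distrib, ← pow_mul, Finset.prod_pow_eq_pow_sum]
  rw [e]; ring

/-- Local analysis on a box around a point with non-zero coordinates. -/
theorem aux_box {p : ℕ} [hp : Fact p.Prime] {n : ℕ} {b : (Fin n → ℕ) → ℤ_[p]}
    (hb : Tendsto b cofinite (nhds 0)) (k : Fin n → ℕ) (m : ℕ)
    (hm : ∀ ω, b ω ≠ 0 → m ≤ ∑ j, k j * ω j) (u : Fin n → ℤ_[p]) (hu : ∀ j, IsUnit (u j))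
    (y : Fin n → ℤ_[p]) (hy : ∀ j, y j = (p : ℤ_[p]) ^ k j * u j)
    (E : ℤ_[p]) (dE : Fin n → ℤ_[p])
    (hE : (p : ℤ_[p]) ∣
      psEval p n (fun ω => b ω * (p : ℤ_[p]) ^ (∑ j, k j * ω j - m)) u - E)
    (hdE : ∀ i, (p : ℤ_[p]) ∣ ∑' ω : Fin n → ℕ,
        ((ω i : ℤ_[p])) * (b ω * (p : ℤ_[p]) ^ (∑ j, k j * ω j - m)) *
          ∏ j, u j ^ (ω j - if j = i then 1 else 0) - dE i)
    (x : Fin n → ℤ_[p]) (hx : ∀ j, ‖x j - y j‖ < ‖y j‖) :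
    (¬ (p : ℤ_[p]) ∣ E → ‖psEval p n b x‖ = ‖(p : ℤ_[p]) ^ m‖) ∧
    ((p : ℤ_[p]) ∣ E → ∀ i, ¬ (p : ℤ_[p]) ∣ dE i →
      ∃ t0, ‖t0 - y i‖ < ‖y i‖ ∧ ∀ t, ‖t - y i‖ < ‖y i‖ →
        ‖psEval p n b (Function.update x i t)‖ = ‖(p : ℤ_[p]) ^ m‖ * ‖y i‖⁻¹ * ‖t - t0‖) := by
  have hp0 : (p : ℤ_[p]) ≠ 0 := by exact_mod_cast hp.out.ne_zero
  have hny : ∀ j, ‖y j‖ = ‖(p : ℤ_[p]) ^ k j‖ := by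
    intro j
    rw [hy, norm_mul, PadicInt.isUnit_iff.1 (hu j), mul_one]
  have hpos : ∀ j, 0 < ‖(p : ℤ_[p]) ^ k j‖ := fun j => norm_pos_iff.2 (pow_ne_zero _ hp0)
  have hball : ∀ j t, ‖t - y j‖ < ‖y j‖ ↔
      ∃ v, (p : ℤ_[p]) ∣ v - u j ∧ t = (p : ℤ_[p]) ^ k j * v := by
    intro j t
    constructor
    · intro h
      have h1 : ((p : ℤ_[p]) ^ k j) ∣ t - y j := by
        rw [← Ideal.mem_span_singleton, ← PadicInt.norm_le_pow_iff_mem_span_pow]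
        refine h.le.trans (le_of_eq ?_)
        rw [hny, PadicInt.norm_p_pow]
      obtain ⟨q, hq⟩ := h1
      refine ⟨u j + q, ?_, ?_⟩
      · rw [hq, hny, norm_mul] at h
        rw [add_sub_cancel_left, ← PadicInt.norm_lt_one_iff_dvd]
        exact (mul_lt_iff_lt_one_right (hpos j)).1 h
      · rw [mul_add, ← hq, hy]; ring
    · rintro ⟨v, hv, rfl⟩
      rw [hny, hy, ← mul_sub, norm_mul]
      exact (mul_lt_iff_lt_one_right (hpos j)).2 ((PadicInt.norm_lt_one_iff_dvd _).2 hv)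
  have hc : Tendsto (fun ω => b ω * (p : ℤ_[p]) ^ (∑ j, k j * ω j - m)) cofinite (nhds 0) :=
    aux_tendsto_mul hb _
  have hsc := aux_scale hb k m hm
  set c := (fun ω => b ω * (p : ℤ_[p]) ^ (∑ j, k j * ω j - m)) with hcdef
  choose v hv hxv using fun j => (hball j (x j)).1 (hx j)
  have hxv' : x = fun j => (p : ℤ_[p]) ^ k j * v j := funext hxv
  have hG : ∀ w : Fin n → ℤ_[p], (∀ j, (p : ℤ_[p]) ∣ w j - u j) →
      (p : ℤ_[p]) ∣ psEval p n c w - E := by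
    intro w hw
    have := dvd_add (aux_ps_congr hc hw) hE
    simpa using this
  refine ⟨fun hnE => ?_, fun hpE i hi => ?_⟩
  · rw [hxv', hsc, norm_mul]
    have : ¬ (p : ℤ_[p]) ∣ psEval p n c v := fun h => hnE ((dvd_sub_right h).1 (hG v hv))
    rw [PadicInt.isUnit_iff.1 (aux_unit_of_not_dvd this), mul_one]
  · have hupd : ∀ t, Function.update x i ((p : ℤ_[p]) ^ k i * t)
        = fun j => (p : ℤ_[p]) ^ k j * (Function.update v i t) j := by
      intro t
      funext j
      by_cases h : j = i
      · subst h; simp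
      · simp [Function.update_of_ne h, hxv]
    have hs : ∀ t t', (p : ℤ_[p]) ∣ t - u i → (p : ℤ_[p]) ∣ t' - u i →
        ∃ Q, (p : ℤ_[p]) ∣ Q - dE i ∧ psEval p n c (Function.update v i t)
          - psEval p n c (Function.update v i t') = (t - t') * Q := by
      intro t t' ht ht'
      obtain ⟨Q, hQ, hQ'⟩ := aux_slope hc hv i t t' ht ht'
      refine ⟨Q, ?_, hQ'⟩
      have := dvd_add hQ (hdE i)
      simpa [hcdef] using this
    obtain ⟨r0, hr0, hz⟩ := aux_zero (fun t => psEval p n c (Function.update v i t)) (u i) (dE i)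
      hi (fun t ht => by
        have : ∀ j, (p : ℤ_[p]) ∣ (Function.update v i t) j - u j := by
          intro j
          by_cases h : j = i
          · subst h; simpa using ht
          · simpa [Function.update_of_ne h] using hv j
        exact (dvd_iff_dvd_of_dvd_sub (hG _ this)).2 hpE) hs
    refine ⟨(p : ℤ_[p]) ^ k i * r0, (hball i _).2 ⟨r0, hr0, rfl⟩, fun t ht => ?_⟩
    obtain ⟨r, hr, rfl⟩ := (hball i t).1 ht
    obtain ⟨Q, hQ, hQ'⟩ := hs r r0 hr hr0
    have hz' : psEval p n c (Function.update v i r0) = 0 := hz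
    rw [hz', sub_zero] at hQ'
    have hQu : ‖Q‖ = 1 := PadicInt.isUnit_iff.1 (aux_unit_of_not_dvd
      fun h => hi ((dvd_iff_dvd_of_dvd_sub hQ).1 h))
    rw [hupd, hsc, hQ', hny, ← mul_sub, norm_mul, norm_mul, norm_mul _ (r - r0), hQu]
    have := (hpos i).ne'
    field_simp

/-- Local analysis for a series `b` congruent to the non-degenerate series `a`. -/
theorem aux_local {p : ℕ} [hp : Fact p.Prime] {n : ℕ} {a : (Fin n → ℕ) → ℤ_[p]}
    (ha : Tendsto a cofinite (nhds 0)) (hfne : ∃ ω, a ω ≠ 0)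
    (hnd : NonDegenerate p n a) (y : Fin n → ℤ_[p]) (hy : ∀ j, y j ≠ 0) :
    ∃ C : ℝ,
    (∀ b : (Fin n → ℕ) → ℤ_[p], Tendsto b cofinite (nhds 0) → (∀ ω, b ω ≠ 0 → a ω ≠ 0) →
      (∀ ω, (p : ℤ_[p]) ∣ b ω - a ω) → ∀ x : Fin n → ℤ_[p], (∀ j, ‖x j - y j‖ < ‖y j‖) →
        ‖psEval p n b x‖ = C) ∨
    ∃ i, ∀ b : (Fin n → ℕ) → ℤ_[p], Tendsto b cofinite (nhds 0) → (∀ ω, b ω ≠ 0 → a ω ≠ 0) →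
      (∀ ω, (p : ℤ_[p]) ∣ b ω - a ω) → ∀ x : Fin n → ℤ_[p], (∀ j, ‖x j - y j‖ < ‖y j‖) →
        ∃ t0, ‖t0 - y i‖ < ‖y i‖ ∧ ∀ t, ‖t - y i‖ < ‖y i‖ →
        ‖psEval p n b (Function.update x i t)‖ = C * ‖t - t0‖ := by
  classical
  set k : Fin n → ℕ := fun j => (y j).valuation with hk
  set u : Fin n → ℤ_[p] := fun j => (PadicInt.unitCoeff (hy j) : ℤ_[p]) with hu
  have hyu : ∀ j, y j = (p : ℤ_[p]) ^ k j * u j := fun j => by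
    rw [mul_comm]; exact PadicInt.unitCoeff_spec (hy j)
  have huu : ∀ j, IsUnit (u j) := fun j => Units.isUnit _
  have hex : ∃ m, ∃ ω ∈ {ω | a ω ≠ 0}, ∑ j, k j * ω j = m := by
    obtain ⟨ω, hω⟩ := hfne
    exact ⟨_, ω, hω, rfl⟩
  set m := Nat.find hex with hmdef
  have hm' := Nat.find_spec hex
  have hm : ∀ ω ∈ {ω | a ω ≠ 0}, m ≤ ∑ j, k j * ω j :=
    fun ω hω => Nat.find_min' hex ⟨ω, hω, rfl⟩
  have hface := aux_face _ k m hm hm'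
  set τ := firstMeetLocus n {ω | a ω ≠ 0} (fun j => (k j : ℝ)) with hτ
  have hndk := hnd (fun j => (k j : ℝ)) (fun j => Nat.cast_nonneg _)
  rw [← hτ] at hndk
  have hcoef : ∀ b : (Fin n → ℕ) → ℤ_[p], (∀ ω, b ω ≠ 0 → a ω ≠ 0) →
      (∀ ω, (p : ℤ_[p]) ∣ b ω - a ω) → ∀ ω, ∀ e : ℤ_[p],
      (p : ℤ_[p]) ∣ b ω * (p : ℤ_[p]) ^ (∑ j, k j * ω j - m) * e -
        Set.indicator {ω : Fin n → ℕ | (fun j => (ω j : ℝ)) ∈ τ} (fun ω => a ω * e) ω := by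
    intro b hb1 hb2 ω e
    by_cases h0 : a ω = 0
    · have : b ω = 0 := by
        by_contra h
        exact hb1 ω h h0
      rw [Set.indicator_apply]
      simp [h0, this]
    · by_cases h : ∑ j, k j * ω j = m
      · rw [Set.indicator_of_mem (show ω ∈ {ω : Fin n → ℕ | (fun j => (ω j : ℝ)) ∈ τ} from
          (hface ω h0).2 h), h]
        simp only [tsub_self, pow_zero, mul_one, ← sub_mul]
        exact (hb2 ω).mul_right _
      · rw [Set.indicator_of_notMem (show ω ∉ {ω : Fin n → ℕ | (fun j => (ω j : ℝ)) ∈ τ} from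
          fun h' => h ((hface ω h0).1 h')), sub_zero]
        have := hm ω h0
        exact ((dvd_pow_self _ (by omega)).mul_left _).mul_right _
  have hsumi : ∀ e : (Fin n → ℕ) → ℤ_[p], Summable (Set.indicator
      {ω : Fin n → ℕ | (fun j => (ω j : ℝ)) ∈ τ} (fun ω => a ω * e ω)) := by
    intro e
    refine (aux_summable ha (Set.indicator
      {ω : Fin n → ℕ | (fun j => (ω j : ℝ)) ∈ τ} e)).congr fun ω => ?_
    by_cases h : ω ∈ {ω : Fin n → ℕ | (fun j => (ω j : ℝ)) ∈ τ}
    · rw [Set.indicator_of_mem h, Set.indicator_of_mem h]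
    · rw [Set.indicator_of_notMem h, Set.indicator_of_notMem h, mul_zero]
  have hgen : ∀ b : (Fin n → ℕ) → ℤ_[p], Tendsto b cofinite (nhds 0) →
      (∀ ω, b ω ≠ 0 → a ω ≠ 0) → (∀ ω, (p : ℤ_[p]) ∣ b ω - a ω) →
      ∀ e : (Fin n → ℕ) → ℤ_[p],
      (p : ℤ_[p]) ∣ ∑' ω, b ω * (p : ℤ_[p]) ^ (∑ j, k j * ω j - m) * e ω - ∑' ω, Set.indicator
        {ω : Fin n → ℕ | (fun j => (ω j : ℝ)) ∈ τ} (fun ω => a ω * e ω) ω := by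
    intro b hb hb1 hb2 e
    refine aux_dvd_tsum_sub (aux_summable (aux_tendsto_mul hb _) _) (hsumi e) fun ω => ?_
    have := hcoef b hb1 hb2 ω (e ω)
    simpa only [Set.indicator_apply] using this
  have hbox : ∀ b : (Fin n → ℕ) → ℤ_[p], Tendsto b cofinite (nhds 0) →
      (∀ ω, b ω ≠ 0 → a ω ≠ 0) → (∀ ω, (p : ℤ_[p]) ∣ b ω - a ω) → _ :=
    fun b hb hb1 hb2 => aux_box hb k m (fun ω h => hm ω (hb1 ω h)) u huu y hyu
      (faceEval p n a τ u) (fun i => faceDerivEval p n a τ i u) (hgen b hb hb1 hb2 _) (by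
        intro i
        have := hgen b hb hb1 hb2
          (fun ω => (ω i : ℤ_[p]) * ∏ j, u j ^ (ω j - if j = i then 1 else 0))
        unfold faceDerivEval
        convert! this using 3
        · funext ω
          ring
        · funext ω
          rw [Set.indicator_apply, Set.indicator_apply]
          congr 1
          ring)
  by_cases hE : (p : ℤ_[p]) ∣ faceEval p n a τ u
  · have : ∃ i, ¬ (p : ℤ_[p]) ∣ faceDerivEval p n a τ i u := by
      by_contra! h
      exact hndk ⟨u, huu, hE, h⟩
    obtain ⟨i, hi⟩ := this
    refine ⟨‖(p : ℤ_[p]) ^ m‖ * ‖y i‖⁻¹, Or.inr ⟨i, fun b hb hb1 hb2 x hx => ?_⟩⟩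
    exact (hbox b hb hb1 hb2 x hx).2 hE i hi
  · refine ⟨‖(p : ℤ_[p]) ^ m‖, Or.inl fun b hb hb1 hb2 x hx => ?_⟩
    exact (hbox b hb hb1 hb2 x hx).1 hE

theorem aux_norm_eq {p : ℕ} [Fact p.Prime] {t y : ℤ_[p]} (h : ‖t - y‖ < ‖y‖) : ‖t‖ = ‖y‖ := by
  rw [← norm_neg y] at h
  rw [← norm_neg y]
  exact PadicInt.norm_eq_of_norm_add_lt_right (by rwa [← sub_eq_add_neg])

/-- The label of the multiplicative ball to which `t` belongs. -/
noncomputable def ballLabel (p : ℕ) [Fact p.Prime] (t : ℤ_[p]) : Option (ℕ × ℕ) :=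
  open Classical in if t = 0 then none else some (t.valuation, t.appr (t.valuation + 1))

theorem aux_label_zero {p : ℕ} [Fact p.Prime] (t : ℤ_[p]) :
    ballLabel p t = none ↔ t = 0 := by
  unfold ballLabel
  split_ifs with h <;> simp [h]

theorem aux_lt_iff {p : ℕ} [hp : Fact p.Prime] (z : ℤ_[p]) {y : ℤ_[p]} (hy : y ≠ 0) :
    ‖z‖ < ‖y‖ ↔ z ∈ (Ideal.span {(p : ℤ_[p]) ^ (y.valuation + 1)} : Ideal ℤ_[p]) := by
  rw [← PadicInt.norm_le_pow_iff_mem_span_pow, PadicInt.norm_le_pow_iff_norm_lt_pow_add_one,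
    PadicInt.norm_eq_zpow_neg_valuation hy]
  push_cast
  simp

theorem aux_label {p : ℕ} [hp : Fact p.Prime] (t : ℤ_[p]) {y : ℤ_[p]} (hy : y ≠ 0) :
    ballLabel p t = ballLabel p y ↔ ‖t - y‖ < ‖y‖ := by
  constructor
  · intro h
    have ht : t ≠ 0 := by
      intro h0
      rw [(aux_label_zero t).2 h0] at h
      exact hy ((aux_label_zero y).1 h.symm)
    unfold ballLabel at h
    rw [if_neg ht, if_neg hy] at h
    simp only [Option.some.injEq, Prod.mk.injEq] at h
    rw [aux_lt_iff _ hy]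
    have h1 := PadicInt.appr_spec (y.valuation + 1) t
    have h2 := PadicInt.appr_spec (y.valuation + 1) y
    rw [← h.2, h.1] at h2
    have := Ideal.sub_mem _ h1 h2
    simpa using this
  · intro h
    have hn := aux_norm_eq h
    have ht : t ≠ 0 := by
      intro h0
      rw [h0, norm_zero] at hn
      exact hy (norm_eq_zero.1 hn.symm)
    have hv : t.valuation = y.valuation := by
      rw [PadicInt.norm_eq_zpow_neg_valuation hy, PadicInt.norm_eq_zpow_neg_valuation ht] at hn
      have := zpow_right_injective₀ (a := (p : ℝ)) (by exact_mod_cast hp.out.pos)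
        (by exact_mod_cast hp.out.one_lt.ne') hn
      simpa using this
    unfold ballLabel
    rw [if_neg ht, if_neg hy, hv]
    have h1 := PadicInt.appr_spec (y.valuation + 1) t
    have h2 := PadicInt.appr_spec (y.valuation + 1) y
    rw [aux_lt_iff _ hy] at h
    have h3 := Ideal.sub_mem _ h1 h
    rw [show t - (t.appr (y.valuation + 1) : ℤ_[p]) - (t - y) = y - t.appr (y.valuation + 1) by
      ring] at h3
    have h4 := PadicInt.zmod_congr_of_sub_mem_span _ _ _ _ h3 h2
    rw [ZMod.natCast_eq_natCast_iff', Nat.mod_eq_of_lt (PadicInt.appr_lt _ _),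
      Nat.mod_eq_of_lt (PadicInt.appr_lt _ _)] at h4
    rw [h4]

theorem aux_meas_ball {p : ℕ} [hp : Fact p.Prime] [MeasurableSpace ℤ_[p]] [BorelSpace ℤ_[p]]
    (y : ℤ_[p]) (r : ℝ) : MeasurableSet {t : ℤ_[p] | ‖t - y‖ < r} :=
  (isOpen_lt (by fun_prop) continuous_const).measurableSet

theorem aux_meas_label {p : ℕ} [hp : Fact p.Prime] [MeasurableSpace ℤ_[p]] [BorelSpace ℤ_[p]]
    (o : Option (ℕ × ℕ)) : MeasurableSet {t : ℤ_[p] | ballLabel p t = o} := by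
  by_cases h : ∃ y, ballLabel p y = o
  · obtain ⟨y, rfl⟩ := h
    by_cases hy : y = 0
    · rw [(aux_label_zero y).2 hy]
      simp only [aux_label_zero]
      exact MeasurableSet.singleton 0
    · simp only [aux_label _ hy]
      exact aux_meas_ball y _
  · have : {t : ℤ_[p] | ballLabel p t = o} = ∅ := by
      ext t
      simp only [Set.mem_ofPred_eq, Set.mem_empty_iff_false, iff_false]
      exact fun ht => h ⟨t, ht⟩
    rw [this]
    exact MeasurableSet.empty

theorem aux_meas {p : ℕ} [hp : Fact p.Prime] [MeasurableSpace ℤ_[p]] [BorelSpace ℤ_[p]] {n : ℕ}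
    {b : (Fin n → ℕ) → ℤ_[p]} (hb : Tendsto b cofinite (nhds 0)) :
    Measurable (psEval p n b) := by
  refine measurable_of_tendsto_metrizable' (f := fun (s : Finset (Fin n → ℕ)) x =>
    ∑ ω ∈ s, b ω * ∏ j, x j ^ ω j) atTop (fun s => ?_) ?_
  · exact Continuous.measurable (by fun_prop)
  · rw [tendsto_pi_nhds]
    intro x
    exact (aux_summable hb fun ω => ∏ j, x j ^ ω j).hasSum

/-- The inner integral over a ball. -/
theorem aux_inner {p : ℕ} [hp : Fact p.Prime] [MeasurableSpace ℤ_[p]] [BorelSpace ℤ_[p]]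
    (μ : Measure ℤ_[p]) [μ.IsAddHaarMeasure] (s C : ℝ) (y t0 : ℤ_[p])
    (h0 : ‖t0 - y‖ < ‖y‖) (g : ℤ_[p] → ℤ_[p])
    (hg : ∀ t, ‖t - y‖ < ‖y‖ → ‖g t‖ = C * ‖t - t0‖) :
    ∫⁻ t, Set.indicator {t | ‖t - y‖ < ‖y‖} (fun t => ENNReal.ofReal (‖g t‖ ^ s)) t ∂μ =
      ∫⁻ t, Set.indicator {t | ‖t‖ < ‖y‖} (fun t => ENNReal.ofReal ((C * ‖t‖) ^ s)) t ∂μ := by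
  rw [← lintegral_sub_right_eq_self
    (Set.indicator {t | ‖t‖ < ‖y‖} (fun t => ENNReal.ofReal ((C * ‖t‖) ^ s))) t0]
  refine lintegral_congr fun t => ?_
  have hiff : ‖t - y‖ < ‖y‖ ↔ ‖t - t0‖ < ‖y‖ := by
    constructor
    · intro h
      rw [show t - t0 = (t - y) + (y - t0) by ring]
      rw [norm_sub_rev] at h0
      exact (IsUltrametricDist.norm_add_le_max _ _).trans_lt (max_lt h h0)
    · intro h
      rw [show t - y = (t - t0) + (t0 - y) by ring]
      exact (IsUltrametricDist.norm_add_le_max _ _).trans_lt (max_lt h h0)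
  by_cases h : ‖t - y‖ < ‖y‖
  · rw [Set.indicator_of_mem (show t ∈ {t | ‖t - y‖ < ‖y‖} from h),
      Set.indicator_of_mem (show t - t0 ∈ {t | ‖t‖ < ‖y‖} from hiff.1 h), hg t h]
  · rw [Set.indicator_of_notMem (show t ∉ {t | ‖t - y‖ < ‖y‖} from h),
      Set.indicator_of_notMem (show t - t0 ∉ {t | ‖t‖ < ‖y‖} from fun h' => h (hiff.2 h'))]

theorem aux_lint {p : ℕ} [hp : Fact p.Prime] [MeasurableSpace ℤ_[p]] [BorelSpace ℤ_[p]]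
    {μ : Measure ℤ_[p]} [μ.IsAddHaarMeasure] (hμ : μ Set.univ = 1) {n : ℕ}
    {a : (Fin n → ℕ) → ℤ_[p]}
    (ha : Tendsto a cofinite (nhds 0)) (hfne : ∃ ω, a ω ≠ 0)
    (hnd : NonDegenerate p n a) {b : (Fin n → ℕ) → ℤ_[p]}
    (hb : Tendsto b cofinite (nhds 0)) (hb1 : ∀ ω, b ω ≠ 0 → a ω ≠ 0)
    (hb2 : ∀ ω, (p : ℤ_[p]) ∣ b ω - a ω) (s : ℝ) :
    ∫⁻ x : Fin n → ℤ_[p], ENNReal.ofReal (‖psEval p n b x‖ ^ s) ∂(Measure.pi fun _ => μ) =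
      ∫⁻ x : Fin n → ℤ_[p], ENNReal.ofReal (‖psEval p n a x‖ ^ s) ∂(Measure.pi fun _ => μ) := by
  classical
  have : IsFiniteMeasure μ := ⟨by rw [hμ]; exact ENNReal.one_lt_top⟩
  have : (nhdsWithin (0 : ℤ_[p]) {0}ᶜ).NeBot := by
    have ht : Tendsto (fun k : ℕ => (p : ℤ_[p]) ^ k) atTop (nhdsWithin (0 : ℤ_[p]) {0}ᶜ) := by
      refine tendsto_nhdsWithin_iff.2 ⟨?_, Eventually.of_forall fun k => ?_⟩
      · apply tendsto_pow_atTop_nhds_zero_of_norm_lt_one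
        rw [PadicInt.norm_p]
        exact inv_lt_one_of_one_lt₀ (by exact_mod_cast hp.out.one_lt)
      · have hp0 : (p : ℤ_[p]) ≠ 0 := by exact_mod_cast hp.out.ne_zero
        exact pow_ne_zero k hp0
    exact ht.neBot
  set B : (Fin n → Option (ℕ × ℕ)) → Set (Fin n → ℤ_[p]) :=
    fun κ => {x | (fun j => ballLabel p (x j)) = κ} with hB
  have hBm : ∀ κ, MeasurableSet (B κ) := by
    intro κ
    have : B κ = ⋂ j, (fun x : Fin n → ℤ_[p] => x j) ⁻¹' {t | ballLabel p t = κ j} := by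
      ext x
      simp [hB, funext_iff]
    rw [this]
    exact MeasurableSet.iInter fun j => measurable_pi_apply j (aux_meas_label _)
  have hBd : Pairwise (Function.onFun Disjoint B) := by
    intro κ κ' h
    refine Set.disjoint_left.2 fun x hx hx' => h ?_
    exact (show _ = κ from hx).symm.trans hx'
  have hBu : ⋃ κ, B κ = Set.univ := Set.eq_univ_of_forall fun x => Set.mem_iUnion.2 ⟨_, rfl⟩
  rw [← setLIntegral_univ, ← setLIntegral_univ (μ := Measure.pi fun _ => μ)
    (fun x => ENNReal.ofReal (‖psEval p n a x‖ ^ s)), ← hBu, lintegral_iUnion hBm hBd,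
    lintegral_iUnion hBm hBd]
  refine tsum_congr fun κ => ?_
  by_cases hne : (B κ).Nonempty
  swap
  · rw [Set.not_nonempty_iff_eq_empty.1 hne]; simp
  obtain ⟨y, hyκ⟩ := hne
  by_cases hy : ∀ j, y j ≠ 0
  swap
  · push Not at hy
    obtain ⟨j, hj⟩ := hy
    have hnull : (Measure.pi fun _ : Fin n => μ) (B κ) = 0 := by
      refine measure_mono_null (t := {x | x j = 0}) (fun x hx => ?_)
        (Measure.pi_hyperplane (fun _ : Fin n => μ) j 0)
      have h1 := congrFun (show (fun j => ballLabel p (x j)) = κ from hx) j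
      have h2 := congrFun (show (fun j => ballLabel p (y j)) = κ from hyκ) j
      rw [← h2, (aux_label_zero _).2 hj] at h1
      exact (aux_label_zero _).1 h1
    rw [Measure.restrict_eq_zero.2 hnull]
    simp
  have hBy : B κ = {x | ∀ j, ‖x j - y j‖ < ‖y j‖} := by
    ext x
    rw [← (show (fun j => ballLabel p (y j)) = κ from hyκ)]
    simp only [hB, Set.mem_ofPred_eq, funext_iff]
    exact forall_congr' fun j => aux_label _ (hy j)
  have hmB := hBm κ
  rw [hBy] at hmB ⊢
  obtain ⟨C, hC | ⟨i, hi⟩⟩ := aux_local ha hfne hnd y hy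
  · refine setLIntegral_congr_fun hmB fun x hx => ?_
    rw [hC b hb hb1 hb2 x hx, hC a ha (fun _ h => h) (fun _ => by simp) x hx]
  · rw [← lintegral_indicator hmB, ← lintegral_indicator hmB]
    refine lintegral_eq_of_lmarginal_eq (μ := fun _ => μ) {i}
      (((aux_meas hb).norm.pow_const s).ennreal_ofReal.indicator hmB)
      (((aux_meas ha).norm.pow_const s).ennreal_ofReal.indicator hmB) ?_
    rw [lmarginal_singleton, lmarginal_singleton]
    funext x
    by_cases hx : ∀ j, j ≠ i → ‖x j - y j‖ < ‖y j‖
    · have hmem : ∀ t, Function.update x i t ∈ {x | ∀ j, ‖x j - y j‖ < ‖y j‖} ↔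
          t ∈ {t | ‖t - y i‖ < ‖y i‖} := by
        intro t
        constructor
        · intro h
          simpa using h i
        · intro h j
          by_cases hj : j = i
          · subst hj; simpa using h
          · rw [Function.update_of_ne hj]; exact hx j hj
      have hfin : ∀ d : (Fin n → ℕ) → ℤ_[p], Tendsto d cofinite (nhds 0) →
          (∀ ω, d ω ≠ 0 → a ω ≠ 0) → (∀ ω, (p : ℤ_[p]) ∣ d ω - a ω) →
          ∫⁻ t, Set.indicator {x : Fin n → ℤ_[p] | ∀ j, ‖x j - y j‖ < ‖y j‖}
            (fun x => ENNReal.ofReal (‖psEval p n d x‖ ^ s)) (Function.update x i t) ∂μ =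
          ∫⁻ t, Set.indicator {t | ‖t‖ < ‖y i‖} (fun t => ENNReal.ofReal ((C * ‖t‖) ^ s)) t ∂μ := by
        intro d hd hd1 hd2
        obtain ⟨t0, ht0, ht⟩ := hi d hd hd1 hd2 (Function.update x i (y i))
          ((hmem _).2 (by simpa using hy i))
        rw [← aux_inner μ s C (y i) t0 ht0 (fun t => psEval p n d (Function.update x i t))]
        · refine lintegral_congr fun t => ?_
          rw [Set.indicator_apply, Set.indicator_apply, if_congr (hmem t) rfl rfl]
        · intro t h
          have := ht t h
          rwa [Function.update_idem] at this
      rw [hfin b hb hb1 hb2, hfin a ha (fun _ h => h) (fun _ => by simp)]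
    · push Not at hx
      obtain ⟨j, hji, hj⟩ := hx
      refine lintegral_congr fun t => ?_
      have hn : Function.update x i t ∉ {x | ∀ j, ‖x j - y j‖ < ‖y j‖} := by
        intro h
        have := h j
        rw [Function.update_of_ne hji] at this
        exact absurd this (not_lt.2 hj)
      rw [Set.indicator_of_notMem hn, Set.indicator_of_notMem hn]

/-- If a nonzero restricted power series `f = ∑ a_ω x^ω` over `ℤ_p` with `f(0) = 0` is
non-degenerate over `𝔽_p` with respect to all the faces of its Newton polyhedron, then
for all sufficiently large `D` the truncation `f_D` (terms of total degree `≤ D`) has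
the same Igusa zeta function as `f`. -/
theorem stmt_19 (p : ℕ) [Fact p.Prime] (n : ℕ)
    [MeasurableSpace ℤ_[p]] [BorelSpace ℤ_[p]]
    (μ : Measure ℤ_[p]) [μ.IsAddHaarMeasure] (hμ : μ Set.univ = 1)
    (a : (Fin n → ℕ) → ℤ_[p]) (ha : Tendsto a cofinite (nhds 0))
    (hfne : ∃ ω, a ω ≠ 0) (h0 : a 0 = 0)
    (hnd : NonDegenerate p n a) :
    ∃ N : ℕ, ∀ D : ℕ, N ≤ D → ∀ s : ℝ, 0 < s →
      (∫ x : Fin n → ℤ_[p],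
          ‖∑' ω : Fin n → ℕ,
            Set.indicator {ω : Fin n → ℕ | ∑ j, ω j ≤ D}
              (fun ω => a ω * ∏ j, x j ^ ω j) ω‖ ^ s
          ∂(Measure.pi fun _ => μ))
        = ∫ x : Fin n → ℤ_[p],
            ‖∑' ω : Fin n → ℕ, a ω * ∏ j, x j ^ ω j‖ ^ s
            ∂(Measure.pi fun _ => μ) := by
  classical
  have hN : ∃ N : ℕ, ∀ ω : Fin n → ℕ, N < ∑ j, ω j → (p : ℤ_[p]) ∣ a ω := by
    have h1 : ∀ᶠ ω in cofinite, (p : ℤ_[p]) ∣ a ω := by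
      have := (tendsto_zero_iff_norm_tendsto_zero.1 ha).eventually (gt_mem_nhds zero_lt_one)
      exact this.mono fun ω h => (PadicInt.norm_lt_one_iff_dvd _).1 h
    have h2 : {ω | ¬ (p : ℤ_[p]) ∣ a ω}.Finite := h1
    obtain ⟨N, hN⟩ := (h2.image fun ω => ∑ j, ω j).bddAbove
    refine ⟨N, fun ω h => ?_⟩
    by_contra hc
    exact absurd (hN ⟨ω, hc, rfl⟩) (not_le.2 h)
  obtain ⟨N, hN⟩ := hN
  refine ⟨N, fun D hD s hs => ?_⟩
  set b : (Fin n → ℕ) → ℤ_[p] := Set.indicator {ω : Fin n → ℕ | ∑ j, ω j ≤ D} a with hb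
  have hbe : ∀ ω, b ω = a ω ∨ (b ω = 0 ∧ (p : ℤ_[p]) ∣ a ω) := by
    intro ω
    by_cases h : ω ∈ {ω : Fin n → ℕ | ∑ j, ω j ≤ D}
    · exact Or.inl (Set.indicator_of_mem h _)
    · exact Or.inr ⟨Set.indicator_of_notMem h _, hN ω (lt_of_le_of_lt hD (not_le.1 h))⟩
  have hbt : Tendsto b cofinite (nhds 0) := by
    rw [tendsto_zero_iff_norm_tendsto_zero] at ha ⊢
    refine squeeze_zero (fun _ => norm_nonneg _) (fun ω => ?_) ha
    rcases hbe ω with h | h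
    · rw [h]
    · simp [h.1]
  have key := aux_lint hμ ha hfne hnd hbt
    (fun ω h => by
      rcases hbe ω with h' | h'
      · rwa [← h']
      · exact absurd h'.1 h)
    (fun ω => by
      rcases hbe ω with h' | h'
      · simp [h']
      · simpa [h'.1] using h'.2) s
  have hL : ∀ x : Fin n → ℤ_[p], ∑' ω : Fin n → ℕ,
            Set.indicator {ω : Fin n → ℕ | ∑ j, ω j ≤ D}
              (fun ω => a ω * ∏ j, x j ^ ω j) ω = psEval p n b x := by
    intro x
    refine tsum_congr fun ω => ?_
    rw [hb, Set.indicator_mul_left]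
  simp only [hL]
  change ∫ x, ‖psEval p n b x‖ ^ s ∂_ = ∫ x, ‖psEval p n a x‖ ^ s ∂_
  rw [integral_eq_lintegral_of_nonneg_ae, integral_eq_lintegral_of_nonneg_ae, key]
  · exact Eventually.of_forall fun x => Real.rpow_nonneg (norm_nonneg _) _
  · exact ((aux_meas ha).norm.pow_const s).aestronglyMeasurable
  · exact Eventually.of_forall fun x => Real.rpow_nonneg (norm_nonneg _) _
  · exact ((aux_meas hbt).norm.pow_const s).aestronglyMeasurable
end
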